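/- If p and p' are tiles with p ∩ p' = ∅, then the Walsh wave packets φ_p and φ_{p'} are orthogonal: ∫_0^∞ φ_p(x) φ_{p'}(x) dx = 0. -/

import Mathlib

/-!
The Walsh functions `W_n` are products of Rademacher functions, so `W_n W_m = W_{n xor m}`, and for
`m ≠ 0` the function `W_m` is both `1`-periodic and antiperiodic (its lowest Rademacher factor
flips under a shift preserving all the higher ones); hence its integral over a period vanishes.

By periodicity the packet of `I × ω`, with frequency index `n`, is a multiple of `W_n(x/|I|)` on
`I`. If `|I'| = 2^j |I|`, the factorization `W_{n'}(y) = W_{n' mod 2^j}(y) W_{⌊n'/2^j⌋}(2^j y)`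
shows that the packet of `I' × ω'`, with frequency index `n'`, restricts on `I` to a multiple of
`W_{⌊n'/2^j⌋}(x/|I|)`, so the inner product is a multiple of the integral of
`W_{n xor ⌊n'/2^j⌋}` over a period. If `ω` and `ω'` are disjoint, then `n ≠ ⌊n'/2^j⌋` and this
integral vanishes; if instead `I` and `I'` are disjoint, the product of the packets is zero.
-/

open MeasureTheory Set
open scoped ENNReal

noncomputable section

/-- A dyadic interval `[n 2^k, (n+1) 2^k) ⊆ [0,∞)`. -/
structure DyadicInterval where
  n : ℕ
  k : ℤ
  deriving DecidableEq

namespace DyadicInterval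

/-- The length `2^k` of a dyadic interval. -/
def len (I : DyadicInterval) : ℝ := 2 ^ I.k

/-- The left endpoint `n 2^k` of a dyadic interval. -/
def lo (I : DyadicInterval) : ℝ := I.n * 2 ^ I.k

/-- A dyadic interval as a subset of `ℝ`. -/
def toSet (I : DyadicInterval) : Set ℝ := Set.Ico I.lo (I.lo + I.len)

end DyadicInterval

/-- The Walsh function of index `m` (Paley ordering): for `y ∈ [0,1)` with binary digits
`y_i`, `W_m(y) = (-1)^{∑ m_i y_i}`. -/
def walshF (m : ℕ) (y : ℝ) : ℝ :=
  ∏ i ∈ Finset.range m, if m.testBit i then (-1 : ℝ) ^ ⌊y * 2 ^ (i + 1)⌋ else 1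

/-- The Walsh wave packet of the rectangle `I × ω`.  For a tile (a rectangle of area one) this
is the unique family satisfying `φ_{I×[0,2^n)} = |I|^{-1/2} 1_I` together with the recursions
`φ_{I×ω_r} = (φ_{I_l×ω} − φ_{I_r×ω})/√2` and `φ_{I×ω_l} = (φ_{I_l×ω} + φ_{I_r×ω})/√2`. -/
def wavePacket (I ω : DyadicInterval) (x : ℝ) : ℝ :=
  I.toSet.indicator (fun x => I.len ^ (-(1 : ℝ) / 2) * walshF ω.n ((x - I.lo) / I.len)) x

/-- `⟨f, g⟩ = ∫_0^∞ f g`. -/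
def innerF (f g : ℝ → ℝ) : ℝ := ∫ x in Set.Ici (0 : ℝ), f x * g x

/-- A tile: a dyadic rectangle of area one. -/
structure Tile where
  I : DyadicInterval
  ω : DyadicInterval
  area : I.k + ω.k = 0

/-- The Walsh wave packet of a tile. -/
def Tile.wp (p : Tile) : ℝ → ℝ := wavePacket p.I p.ω

/-- A tile as a subset of `[0,∞) × [0,∞)`. -/
def Tile.toSet (p : Tile) : Set (ℝ × ℝ) := p.I.toSet ×ˢ p.ω.toSet

/-- A quartile: a dyadic rectangle of area four. -/
structure Quartile where
  I : DyadicInterval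
  ω : DyadicInterval
  area : I.k + ω.k = 2

namespace Quartile

/-- The frequency interval `ω_{P_{i+1}}` (the `i`-th dyadic grandchild of `ω_P`, `i : Fin 4`,
in increasing order). -/
def freq (P : Quartile) (i : Fin 4) : DyadicInterval := ⟨4 * P.ω.n + i.val, P.ω.k - 2⟩

/-- The tile `P_{i+1} = I_P × ω_{P_{i+1}}` as a subset of the plane, for `i : Fin 4`. -/
def subtileSet (P : Quartile) (i : Fin 4) : Set (ℝ × ℝ) := P.I.toSet ×ˢ (P.freq i).toSet

/-- The Walsh wave packet `φ_{P_{i+1}}` for `i : Fin 4`. -/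
def wp (P : Quartile) (i : Fin 4) : ℝ → ℝ := wavePacket P.I (P.freq i)

end Quartile

instance : DecidableEq Quartile := fun P Q =>
  decidable_of_iff (P.I = Q.I ∧ P.ω = Q.ω) (by cases P; cases Q; simp)

/-- `(T, ξ, I_T)` is a tree: `ξ ∈ [0,∞)` and every `P ∈ T` has `I_P ⊆ I_T` and `ξ ∈ ω_P`. -/
def IsTree (T : Finset Quartile) (ξ : ℝ) (It : DyadicInterval) : Prop :=
  0 ≤ ξ ∧ ∀ P ∈ T, P.I.toSet ⊆ It.toSet ∧ ξ ∈ P.ω.toSet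

/-- An `i`-overlapping tree (`i : Fin 4` indexes `P_1,…,P_4`): `ξ_T ∈ ω_{P_{i+1}}` for all `P`. -/
def IsOverlapping (i : Fin 4) (T : Finset Quartile) (ξ : ℝ) (It : DyadicInterval) : Prop :=
  IsTree T ξ It ∧ ∀ P ∈ T, ξ ∈ (P.freq i).toSet

/-- An `i`-lacunary tree: `j`-overlapping for some `j ≠ i`. -/
def IsLacunary (i : Fin 4) (T : Finset Quartile) (ξ : ℝ) (It : DyadicInterval) : Prop :=
  ∃ j, j ≠ i ∧ IsOverlapping j T ξ It

/-- `ω_T`: the dyadic interval of length `|I_T|⁻¹` containing `ξ`; `p_T = I_T × ω_T`. -/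
def topFreq (It : DyadicInterval) (ξ : ℝ) : DyadicInterval := ⟨(⌊ξ * 2 ^ It.k⌋).toNat, -It.k⟩

/-- The dyadic interval of length `2^k` containing `x ≥ 0`. -/
def dyadicPiece (k : ℤ) (x : ℝ) : Set ℝ :=
  Set.Ico ((⌊x / 2 ^ k⌋ : ℝ) * 2 ^ k) (((⌊x / 2 ^ k⌋ : ℝ) + 1) * 2 ^ k)

/-- The dyadic averaging operator `A_k[f](x) = |I|⁻¹ ∫_I f` with `I ∋ x` dyadic, `|I| = 2^k`. -/
def dyadicAvg (k : ℤ) (f : ℝ → ℝ) (x : ℝ) : ℝ :=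
  ((2 : ℝ) ^ k)⁻¹ * ∫ y in dyadicPiece k x, f y

/-- The `r`-variation seminorm of `g : ℤ → ℝ` over the index set `S ⊆ ℤ`:
the supremum of `(∑_{j=1}^N |g(k_j) − g(k_{j−1})|^r)^{1/r}` over finite increasing
sequences `k_0 < ⋯ < k_N` in `S`. -/
def varNorm (r : ℝ) (S : Set ℤ) (g : ℤ → ℝ) : ℝ≥0∞ :=
  ⨆ (N : ℕ) (k : ℕ → ℤ) (_ : StrictMono k) (_ : ∀ j ≤ N, k j ∈ S),
    (∑ j ∈ Finset.range N, ENNReal.ofReal (|g (k (j + 1)) - g (k j)| ^ r)) ^ (1 / r)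

/-- The dyadic `L^t` Hardy–Littlewood maximal operator `M^t[f](x) = sup_k (A_k[|f|^t](x))^{1/t}`. -/
def maxOp (t : ℝ) (f : ℝ → ℝ) (x : ℝ) : ℝ≥0∞ :=
  ⨆ k : ℤ, ((ENNReal.ofReal ((2 : ℝ) ^ k))⁻¹ *
    ∫⁻ y in dyadicPiece k x, ENNReal.ofReal (|f y| ^ t)) ^ (1 / t)

/-- Given a strictly increasing `kk : ℤ → ℤ` and coefficients `a : ℤ → ℝ`, the coefficient
`a_m` where `m` is the (unique) integer with `kk (m-1) ≤ K < kk m` (`K = log₂|I_P|`),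
and `0` if no such `m` exists. -/
def linCoeff (kk : ℤ → ℤ) (a : ℤ → ℝ) (K : ℤ) : ℝ :=
  letI := Classical.propDecidable (∃ m : ℤ, kk (m - 1) ≤ K ∧ K < kk m)
  if h : ∃ m : ℤ, kk (m - 1) ≤ K ∧ K < kk m then a h.choose else 0

/-- Linearization data for the `r`-variation: measurably in `x`, a strictly increasing
sequence of integers `k_j(x)` and coefficients `a_j(x)` with `∑_j |a_j(x)|^{r'} ≤ 1`,
`r' = r/(r-1)`. -/
structure LinData (r : ℝ) where
  kseq : ℝ → ℤ → ℤ
  aseq : ℝ → ℤ → ℝ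
  mono : ∀ x, StrictMono (kseq x)
  meas_k : ∀ j, Measurable fun x => kseq x j
  meas_a : ∀ j, Measurable fun x => aseq x j
  abound : ∀ x, ∀ s : Finset ℤ, ∑ j ∈ s, |aseq x j| ^ (r / (r - 1)) ≤ 1

/-- `a_P(x)` for a quartile `P`. -/
def LinData.coeff {r : ℝ} (L : LinData r) (P : Quartile) (x : ℝ) : ℝ :=
  linCoeff (L.kseq x) (L.aseq x) P.I.k

/-- The modified wave packets: `φ̃_{P_3}(x) = a_P(x) φ_{P_3}(x)` and `φ̃_{P_i} = φ_{P_i}`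
for `i ≠ 3` (here `i : Fin 4`, so index `2` plays the role of `3`). -/
def LinData.wp {r : ℝ} (L : LinData r) (P : Quartile) (i : Fin 4) (x : ℝ) : ℝ :=
  (if i = (2 : Fin 4) then L.coeff P x else 1) * P.wp i x

/-- `size_i(Ps, f)`: the sup of `(|I_T|⁻¹ ∑_{P ∈ T} |⟨f, φ̃_{P_i}⟩|²)^{1/2}` over
`i`-lacunary trees `T ⊆ Ps`. -/
def treeSize {r : ℝ} (L : LinData r) (i : Fin 4) (Ps : Set Quartile) (f : ℝ → ℝ) : ℝ≥0∞ :=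
  ⨆ (T : Finset Quartile) (ξ : ℝ) (It : DyadicInterval)
    (_ : IsLacunary i T ξ It) (_ : (T : Set Quartile) ⊆ Ps),
    ENNReal.ofReal ((It.len)⁻¹ * ∑ P ∈ T, innerF f (L.wp P i) ^ 2) ^ ((1 : ℝ) / 2)

/-- Lebesgue measure restricted to `[0,∞)`. -/
def mu0 : Measure ℝ := volume.restrict (Set.Ici 0)

end

/-- The Rademacher function `r_i(y) = (-1)^{y_i}`, where `y_i` is the binary digit of `y` of weight
`2^{-(i+1)}`, so that `W_m = ∏ r_i` over the binary digits `m_i = 1` of `m`. -/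
noncomputable def rademacher (i : ℕ) (y : ℝ) : ℝ := (-1) ^ ⌊y * 2 ^ (i + 1)⌋

lemma rademacher_mul_self (i : ℕ) (y : ℝ) : rademacher i y * rademacher i y = 1 := by
  rw [rademacher, ← mul_zpow, neg_one_mul, neg_neg, one_zpow]

lemma rademacher_add (j i : ℕ) (y : ℝ) : rademacher (j + i) y = rademacher i (2 ^ j * y) := by
  simp only [rademacher]
  congr 2
  ring

lemma rademacher_antiperiodic (i : ℕ) :
    Function.Antiperiodic (rademacher i) (2 ^ (i + 1))⁻¹ := fun y => by
  rw [rademacher, add_mul, inv_mul_cancel₀ (by positivity), Int.floor_add_one,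
    zpow_add_one₀ (by norm_num), mul_neg_one, rademacher]

lemma rademacher_periodic (i : ℕ) : Function.Periodic (rademacher i) 1 := by
  have h := (rademacher_antiperiodic i).nat_even_mul_periodic (2 ^ i)
  have hone : ((2 ^ i : ℕ) : ℝ) * (2 * (2 ^ (i + 1))⁻¹) = 1 := by
    push_cast
    field_simp
    ring
  rwa [hone] at h

lemma rademacher_eq_of_floor_eq {i j : ℕ} (hij : i < j) {x y : ℝ}
    (h : ⌊2 ^ j * x⌋ = ⌊2 ^ j * y⌋) : rademacher i x = rademacher i y := by
  obtain ⟨d, rfl⟩ := Nat.exists_eq_add_of_le (Nat.succ_le_of_lt hij)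
  have coarsen (z : ℝ) : ⌊z * 2 ^ (i + 1)⌋ = ⌊2 ^ (i + 1 + d) * z⌋ / (2 ^ d : ℕ) := by
    rw [← Int.floor_div_natCast]
    congr 1
    push_cast
    field_simp
    ring
  rw [rademacher, rademacher, coarsen, coarsen, h]

lemma walshF_eq_prod_rademacher {m N : ℕ} (hm : m < 2 ^ N) (y : ℝ) :
    walshF m y = ∏ i ∈ Finset.range N, if m.testBit i then rademacher i y else 1 := by
  have extend {a b : ℕ} (hab : a ≤ b) (ha : m < 2 ^ a) :
      ∏ i ∈ Finset.range a, (if m.testBit i then rademacher i y else 1) =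
        ∏ i ∈ Finset.range b, if m.testBit i then rademacher i y else 1 := by
    refine Finset.prod_subset (Finset.range_subset_range.2 hab) fun i _ hi => ?_
    have hai : a ≤ i := by simpa only [Finset.mem_range, not_lt] using hi
    simp [Nat.testBit_lt_two_pow (ha.trans_le (Nat.pow_le_pow_right two_pos hai))]
  rcases le_total m N with h | h
  · exact extend h Nat.lt_two_pow_self
  · exact (extend h hm).symm

lemma walshF_zero (y : ℝ) : walshF 0 y = 1 := Finset.prod_range_zero _

lemma walshF_one (y : ℝ) : walshF 1 y = rademacher 0 y := by
  simp [walshF_eq_prod_rademacher (show 1 < 2 ^ 1 by norm_num)]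

lemma walshF_mul (n m : ℕ) (y : ℝ) : walshF n y * walshF m y = walshF (n ^^^ m) y := by
  have hn : n < 2 ^ (n + m) := Nat.lt_two_pow_self.trans_le (Nat.pow_le_pow_right two_pos (by lia))
  have hm : m < 2 ^ (n + m) := Nat.lt_two_pow_self.trans_le (Nat.pow_le_pow_right two_pos (by lia))
  rw [walshF_eq_prod_rademacher hn, walshF_eq_prod_rademacher hm,
    walshF_eq_prod_rademacher (Nat.xor_lt_two_pow hn hm), ← Finset.prod_mul_distrib]
  refine Finset.prod_congr rfl fun i _ => ?_
  rw [Nat.testBit_xor]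
  cases n.testBit i <;> cases m.testBit i <;> simp [rademacher_mul_self]

lemma walshF_eq_mod_mul_div (n j : ℕ) (y : ℝ) :
    walshF n y = walshF (n % 2 ^ j) y * walshF (n / 2 ^ j) (2 ^ j * y) := by
  have hn : n < 2 ^ (j + n) := Nat.lt_two_pow_self.trans_le (Nat.pow_le_pow_right two_pos (by lia))
  have hdiv : n / 2 ^ j < 2 ^ n := (Nat.div_le_self _ _).trans_lt Nat.lt_two_pow_self
  rw [walshF_eq_prod_rademacher hn, Finset.prod_range_add,
    walshF_eq_prod_rademacher (Nat.mod_lt n (by positivity)), walshF_eq_prod_rademacher hdiv]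
  congr 1 <;> refine Finset.prod_congr rfl fun i hi => ?_
  · simp [Nat.testBit_mod_two_pow, Finset.mem_range.1 hi]
  · rw [rademacher_add, Nat.testBit_div_two_pow, add_comm]

lemma walshF_periodic (m : ℕ) : Function.Periodic (walshF m) 1 := fun y => by
  simp only [walshF_eq_prod_rademacher Nat.lt_two_pow_self, rademacher_periodic _ y]

lemma walshF_eq_of_floor_eq {m j : ℕ} (hm : m < 2 ^ j) {x y : ℝ}
    (h : ⌊2 ^ j * x⌋ = ⌊2 ^ j * y⌋) : walshF m x = walshF m y := by
  rw [walshF_eq_prod_rademacher hm, walshF_eq_prod_rademacher hm]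
  refine Finset.prod_congr rfl fun i hi => ?_
  rw [rademacher_eq_of_floor_eq (Finset.mem_range.1 hi) h]

lemma walshF_antiperiodic_of_odd {m : ℕ} (hm : Odd m) :
    Function.Antiperiodic (walshF m) 2⁻¹ := fun y => by
  have hfactor (z : ℝ) : walshF m z = rademacher 0 z * walshF (m / 2) (2 * z) := by
    simpa [Nat.odd_iff.1 hm, walshF_one] using walshF_eq_mod_mul_div m 1 z
  have hflip : rademacher 0 (y + 2⁻¹) = -rademacher 0 y := by
    simpa using rademacher_antiperiodic 0 y
  rw [hfactor, hfactor, hflip, mul_add, mul_inv_cancel₀ two_ne_zero, walshF_periodic, neg_mul]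

lemma exists_antiperiodic_walshF {m : ℕ} (hm : m ≠ 0) :
    ∃ c, Function.Antiperiodic (walshF m) c := by
  obtain ⟨k, a, ha, rfl⟩ := Nat.exists_eq_two_pow_mul_odd hm
  have hdilate : walshF (2 ^ k * a) = fun y => walshF a (2 ^ k * y) := funext fun y => by
    rw [walshF_eq_mod_mul_div _ k, Nat.mul_mod_right, walshF_zero, one_mul,
      Nat.mul_div_cancel_left _ (by positivity)]
  rw [hdilate]
  exact ⟨_, (walshF_antiperiodic_of_odd ha).const_mul (by positivity)⟩

lemma intervalIntegral_eq_zero_of_periodic_of_antiperiodic {E : Type*} [NormedAddCommGroup E]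
    [NormedSpace ℝ E] {f : ℝ → E} {T c : ℝ} (hT : Function.Periodic f T)
    (hc : Function.Antiperiodic f c) (a : ℝ) : ∫ x in a..(a + T), f x = 0 := by
  have : IsAddTorsionFree E := .of_isTorsionFree ℝ E
  refine self_eq_neg.1 ?_
  calc ∫ x in a..(a + T), f x
      = ∫ x in (a + c)..(a + c + T), f x := hT.intervalIntegral_add_eq a (a + c)
    _ = ∫ x in a..(a + T), f (x + c) := by
        rw [intervalIntegral.integral_comp_add_right, add_right_comm]
    _ = -∫ x in a..(a + T), f x := by simp only [hc _, intervalIntegral.integral_neg]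

namespace DyadicInterval

lemma len_pos (I : DyadicInterval) : 0 < I.len := zpow_pos two_pos _

lemma measurableSet_toSet (I : DyadicInterval) : MeasurableSet I.toSet := measurableSet_Ico

lemma toSet_subset_Ici (I : DyadicInterval) : I.toSet ⊆ Ici 0 := fun _ hx =>
  (mul_nonneg I.n.cast_nonneg I.len_pos.le).trans hx.1

lemma toSet_nonempty (I : DyadicInterval) : I.toSet.Nonempty :=
  nonempty_Ico.2 (lt_add_of_pos_right _ I.len_pos)

lemma mem_toSet_iff_floor {I : DyadicInterval} {x : ℝ} : x ∈ I.toSet ↔ ⌊x / I.len⌋ = I.n := by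
  rw [Int.floor_eq_iff, le_div_iff₀ I.len_pos, div_lt_iff₀ I.len_pos, add_one_mul]
  rfl

variable {I J : DyadicInterval} {j : ℕ}

lemma len_eq_two_pow_mul (hk : J.k = I.k + j) : J.len = 2 ^ j * I.len := by
  rw [len, len, hk, zpow_add₀ two_ne_zero, zpow_natCast, mul_comm]

lemma mem_toSet_iff_of_mem (hk : J.k = I.k + j) {x : ℝ} (hx : x ∈ I.toSet) :
    x ∈ J.toSet ↔ I.n / 2 ^ j = J.n := by
  have hfloor : ⌊x / J.len⌋ = (I.n / 2 ^ j : ℕ) := by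
    have hdiv : x / J.len = x / I.len / (2 ^ j : ℕ) := by
      rw [len_eq_two_pow_mul hk, div_div, mul_comm, Nat.cast_pow, Nat.cast_ofNat]
    rw [hdiv, Int.floor_div_natCast, mem_toSet_iff_floor.1 hx, Int.natCast_div]
  rw [mem_toSet_iff_floor, hfloor, Nat.cast_inj]

lemma disjoint_toSet_iff (hk : J.k = I.k + j) :
    Disjoint I.toSet J.toSet ↔ I.n / 2 ^ j ≠ J.n := by
  refine ⟨fun h hn => ?_, fun hn => ?_⟩
  · obtain ⟨x, hx⟩ := I.toSet_nonempty
    exact disjoint_left.1 h hx ((mem_toSet_iff_of_mem hk hx).2 hn)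
  · exact disjoint_left.2 fun x hI hJ => hn ((mem_toSet_iff_of_mem hk hI).1 hJ)

lemma integral_walshF_div_len (I : DyadicInterval) {m : ℕ} (hm : m ≠ 0) :
    ∫ x in I.toSet, walshF m (x / I.len) = 0 := by
  obtain ⟨c, hc⟩ := exists_antiperiodic_walshF hm
  have hper : Function.Periodic (fun x => walshF m (x / I.len)) I.len := by
    simpa only [one_mul] using (walshF_periodic m).div_const I.len
  have hanti : Function.Antiperiodic (fun x => walshF m (x / I.len)) (c * I.len) :=
    hc.div_inv I.len_pos.ne'
  rw [toSet, integral_Ico_eq_integral_Ioc,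
    ← intervalIntegral.integral_of_le (le_add_of_nonneg_right I.len_pos.le)]
  exact intervalIntegral_eq_zero_of_periodic_of_antiperiodic hper hanti I.lo

end DyadicInterval

section WavePacket

variable {I J : DyadicInterval} {j : ℕ}

lemma wavePacket_of_mem (ω : DyadicInterval) {x : ℝ} (hx : x ∈ I.toSet) :
    wavePacket I ω x = I.len ^ (-(1 : ℝ) / 2) * walshF ω.n (x / I.len) := by
  have hshift : (x - I.lo) / I.len = x / I.len - I.n * 1 := by
    rw [sub_div, mul_one]
    exact congrArg _ (mul_div_cancel_right₀ _ I.len_pos.ne')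
  rw [wavePacket, indicator_of_mem hx, hshift, (walshF_periodic _).sub_nat_mul_eq]

lemma wavePacket_of_notMem (ω : DyadicInterval) {x : ℝ} (hx : x ∉ I.toSet) :
    wavePacket I ω x = 0 :=
  indicator_of_notMem hx _

lemma wavePacket_mul_eq_zero_of_disjoint (h : Disjoint I.toSet J.toSet) (ω ω' : DyadicInterval)
    (x : ℝ) : wavePacket I ω x * wavePacket J ω' x = 0 := by
  by_cases hx : x ∈ I.toSet
  · rw [wavePacket_of_notMem ω' (disjoint_left.1 h hx), mul_zero]
  · rw [wavePacket_of_notMem ω hx, zero_mul]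

lemma exists_wavePacket_eqOn (hk : J.k = I.k + j) (ω : DyadicInterval) :
    ∃ c, EqOn (wavePacket J ω) (fun x => c * walshF (ω.n / 2 ^ j) (x / I.len)) I.toSet := by
  by_cases hn : I.n / 2 ^ j = J.n
  · refine ⟨J.len ^ (-(1 : ℝ) / 2) * walshF (ω.n % 2 ^ j) (I.n / 2 ^ j), fun x hx => ?_⟩
    have hscale : 2 ^ j * (x / J.len) = x / I.len := by
      rw [DyadicInterval.len_eq_two_pow_mul hk]
      field_simp
    have hconst : walshF (ω.n % 2 ^ j) (x / J.len) = walshF (ω.n % 2 ^ j) (I.n / 2 ^ j) := by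
      refine walshF_eq_of_floor_eq (Nat.mod_lt _ (by positivity)) ?_
      rw [hscale, mul_div_cancel₀ _ (by positivity), Int.floor_natCast]
      exact DyadicInterval.mem_toSet_iff_floor.1 hx
    rw [wavePacket_of_mem ω ((DyadicInterval.mem_toSet_iff_of_mem hk hx).2 hn),
      walshF_eq_mod_mul_div ω.n j, hscale, hconst, ← mul_assoc]
  · refine ⟨0, fun x hx => ?_⟩
    rw [wavePacket_of_notMem ω (mt (DyadicInterval.mem_toSet_iff_of_mem hk hx).1 hn)]
    exact (zero_mul _).symm

lemma integral_wavePacket_mul_eq_zero (hk : J.k = I.k + j) {ω ω' : DyadicInterval}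
    (hω : ω.n ≠ ω'.n / 2 ^ j) :
    ∫ x in Ici (0 : ℝ), wavePacket I ω x * wavePacket J ω' x = 0 := by
  obtain ⟨c, hc⟩ := exists_wavePacket_eqOn hk ω'
  have hxor : ω.n ^^^ ω'.n / 2 ^ j ≠ 0 := xor_eq_zero_iff.not.2 hω
  calc ∫ x in Ici (0 : ℝ), wavePacket I ω x * wavePacket J ω' x
      = ∫ x in I.toSet, wavePacket I ω x * wavePacket J ω' x := by
        refine setIntegral_eq_of_subset_of_forall_sdiff_eq_zero measurableSet_Ici
          I.toSet_subset_Ici fun x hx => ?_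
        rw [wavePacket_of_notMem ω hx.2, zero_mul]
    _ = ∫ x in I.toSet,
          I.len ^ (-(1 : ℝ) / 2) * c * walshF (ω.n ^^^ ω'.n / 2 ^ j) (x / I.len) := by
        refine setIntegral_congr_fun I.measurableSet_toSet fun x hx => ?_
        simp only [wavePacket_of_mem ω hx, hc hx, ← walshF_mul]
        ring
    _ = 0 := by
        rw [integral_const_mul, I.integral_walshF_div_len hxor, mul_zero]

end WavePacket

/-- Wave packets of disjoint tiles are orthogonal: if `p ∩ p' = ∅` then
`∫_0^∞ φ_p φ_{p'} = 0`. -/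
theorem wavePacket_orthogonal_of_disjoint (p p' : Tile) (h : Disjoint p.toSet p'.toSet) :
    ∫ x in Set.Ici (0 : ℝ), p.wp x * p'.wp x = 0 := by
  rcases disjoint_prod.1 h with hI | hω
  · simp only [Tile.wp, wavePacket_mul_eq_zero_of_disjoint hI, integral_zero]
  · wlog hk : p.I.k ≤ p'.I.k generalizing p p'
    · simpa only [mul_comm] using this p' p h.symm hω.symm (le_of_not_ge hk)
    obtain ⟨j, hj⟩ := Int.le.dest hk
    have hωk : p.ω.k = p'.ω.k + j := by linarith [p.area, p'.area]
    exact integral_wavePacket_mul_eq_zero hj.symm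
      ((DyadicInterval.disjoint_toSet_iff hωk).1 hω.symm).symm
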